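/- Let c_h denote the number of h-cliques in a graph G on n vertices. Then for all h ≥ 2 with c_h > 0, the Moon–Moser inequality holds: c_{h+1}/c_h ≥ (h²·c_h/c_{h-1} - n)/(h² - 1). -/

import Mathlib

/-!
Let `d t` be the number of common neighbors of a clique `t`. Pairs of a `(k + 1)`-clique and one of
its vertices correspond to pairs of a `k`-clique and one of its common neighbors, so
`∑ d t = (k + 1) c_{k+1}` over the `k`-cliques `t`, and `∑ (d t)²` is the sum of `d (s \ {u})` over
the `(k + 1)`-cliques `s` and the vertices `u ∈ s`. A vertex that is not adjacent to all of `s` is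
adjacent to all of `s \ {u}` for at most one `u`, hence for a fixed `s` these terms add up to at
most `n + k d s`. The inequality follows by applying Cauchy–Schwarz to `∑ d t`.
-/

open Finset

section Erase

variable {α β : Type*} [DecidableEq α]

theorem card_filter_forall_mem_erase_le_one {p : α → Prop} [DecidablePred p] {s : Finset α}
    (hs : ¬ ∀ w ∈ s, p w) : #{u ∈ s | ∀ w ∈ s.erase u, p w} ≤ 1 := by
  push Not at hs
  obtain ⟨w, hw, hpw⟩ := hs
  have subset_singleton : {u ∈ s | ∀ w ∈ s.erase u, p w} ⊆ {w} := by
    intro u hu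
    rw [mem_singleton]
    by_contra huw
    exact hpw ((mem_filter.1 hu).2 w (mem_erase.2 ⟨Ne.symm huw, hw⟩))
  exact (card_le_card subset_singleton).trans_eq (card_singleton w)

theorem sum_card_filter_forall_mem_erase_le (r : β → α → Prop) [∀ v, DecidablePred (r v)]
    (s : Finset α) (t : Finset β) :
    ∑ u ∈ s, #{v ∈ t | ∀ w ∈ s.erase u, r v w} ≤ #t + (#s - 1) * #{v ∈ t | ∀ w ∈ s, r v w} := by
  have card_le (v : β) : #{u ∈ s | ∀ w ∈ s.erase u, r v w} ≤
      1 + if ∀ w ∈ s, r v w then #s - 1 else 0 := by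
    split_ifs with hv
    · exact (card_filter_le _ _).trans (by lia)
    · exact card_filter_forall_mem_erase_le_one hv
  calc ∑ u ∈ s, #{v ∈ t | ∀ w ∈ s.erase u, r v w}
      = ∑ v ∈ t, #{u ∈ s | ∀ w ∈ s.erase u, r v w} :=
        sum_card_bipartiteAbove_eq_sum_card_bipartiteBelow fun u v ↦ ∀ w ∈ s.erase u, r v w
    _ ≤ ∑ v ∈ t, (1 + if ∀ w ∈ s, r v w then #s - 1 else 0) := sum_le_sum fun v _ ↦ card_le v
    _ = #t + (#s - 1) * #{v ∈ t | ∀ w ∈ s, r v w} := by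
        rw [sum_add_distrib, ← card_eq_sum_ones, ← sum_filter, sum_const, smul_eq_mul, mul_comm]

end Erase

section CommonNeighbors

variable {V : Type*} [Fintype V] (G : SimpleGraph V) [DecidableRel G.Adj]

/-- The common neighborhood of a set of vertices `s`. For a `k`-clique `s`, these are the vertices
extending `s` to a `(k + 1)`-clique. -/
def commonNeighborFinset (s : Finset V) : Finset V :=
  {v | ∀ u ∈ s, G.Adj v u}

variable {G} in
theorem mem_commonNeighborFinset {s : Finset V} {v : V} :
    v ∈ commonNeighborFinset G s ↔ ∀ u ∈ s, G.Adj v u :=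
  mem_filter_univ v

variable {G} in
theorem notMem_of_mem_commonNeighborFinset {s : Finset V} {v : V}
    (hv : v ∈ commonNeighborFinset G s) : v ∉ s :=
  fun hvs ↦ G.irrefl (mem_commonNeighborFinset.1 hv v hvs)

variable [DecidableEq V]

theorem sum_card_commonNeighborFinset_erase_le (s : Finset V) :
    ∑ u ∈ s, #(commonNeighborFinset G (s.erase u)) ≤
      Fintype.card V + (#s - 1) * #(commonNeighborFinset G s) :=
  sum_card_filter_forall_mem_erase_le G.Adj s univ

theorem sum_cliqueFinset_succ_sum_erase {M : Type*} [AddCommMonoid M] (k : ℕ)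
    (f : Finset V → V → M) :
    ∑ s ∈ G.cliqueFinset (k + 1), ∑ u ∈ s, f (s.erase u) u =
      ∑ t ∈ G.cliqueFinset k, ∑ v ∈ commonNeighborFinset G t, f t v := by
  simp_rw [sum_sigma']
  refine sum_bij' (fun p _ ↦ ⟨p.1.erase p.2, p.2⟩) (fun p _ ↦ ⟨insert p.2 p.1, p.2⟩)
    ?erase_mem ?insert_mem ?insert_erase ?erase_insert fun _ _ ↦ rfl
  case erase_mem =>
    rintro ⟨s, u⟩ hsu
    simp only [mem_sigma, SimpleGraph.mem_cliqueFinset_iff, mem_commonNeighborFinset] at hsu ⊢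
    obtain ⟨hs, hu⟩ := hsu
    exact ⟨hs.erase_of_mem hu, fun w hw ↦
      hs.isClique hu (mem_of_mem_erase hw) (ne_of_mem_erase hw).symm⟩
  case insert_mem =>
    rintro ⟨t, v⟩ htv
    simp only [mem_sigma, SimpleGraph.mem_cliqueFinset_iff, mem_commonNeighborFinset] at htv ⊢
    exact ⟨htv.1.insert htv.2, mem_insert_self v t⟩
  case insert_erase =>
    rintro ⟨s, u⟩ hsu
    simp only [insert_erase (mem_sigma.1 hsu).2]
  case erase_insert =>
    rintro ⟨t, v⟩ htv
    simp only [erase_insert (notMem_of_mem_commonNeighborFinset (mem_sigma.1 htv).2)]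

theorem sum_card_commonNeighborFinset (k : ℕ) :
    ∑ t ∈ G.cliqueFinset k, #(commonNeighborFinset G t) = (k + 1) * #(G.cliqueFinset (k + 1)) :=
  calc ∑ t ∈ G.cliqueFinset k, #(commonNeighborFinset G t)
      = ∑ s ∈ G.cliqueFinset (k + 1), #s := by
        simp_rw [card_eq_sum_ones]
        exact (sum_cliqueFinset_succ_sum_erase G k fun _ _ ↦ 1).symm
    _ = (k + 1) * #(G.cliqueFinset (k + 1)) := by
        rw [sum_const_nat fun s hs ↦ (SimpleGraph.mem_cliqueFinset_iff.1 hs).card_eq, mul_comm]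

theorem sum_sq_card_commonNeighborFinset_le (k : ℕ) :
    ∑ t ∈ G.cliqueFinset k, #(commonNeighborFinset G t) ^ 2 ≤
      Fintype.card V * #(G.cliqueFinset (k + 1)) + k * ((k + 2) * #(G.cliqueFinset (k + 2))) :=
  calc ∑ t ∈ G.cliqueFinset k, #(commonNeighborFinset G t) ^ 2
      = ∑ s ∈ G.cliqueFinset (k + 1), ∑ u ∈ s, #(commonNeighborFinset G (s.erase u)) := by
        simp_rw [sum_cliqueFinset_succ_sum_erase G k fun t _ ↦ #(commonNeighborFinset G t),
          sum_const, smul_eq_mul, sq]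
    _ ≤ ∑ s ∈ G.cliqueFinset (k + 1), (Fintype.card V + k * #(commonNeighborFinset G s)) :=
        sum_le_sum fun s hs ↦ by
          have hcard : #s = k + 1 := (SimpleGraph.mem_cliqueFinset_iff.1 hs).card_eq
          simpa only [hcard, Nat.add_sub_cancel] using sum_card_commonNeighborFinset_erase_le G s
    _ = Fintype.card V * #(G.cliqueFinset (k + 1)) +
          k * ((k + 2) * #(G.cliqueFinset (k + 2))) := by
        rw [sum_add_distrib, ← mul_sum, sum_card_commonNeighborFinset, sum_const, smul_eq_mul,
          mul_comm]

theorem sq_succ_mul_card_cliqueFinset_succ_le (k : ℕ) :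
    ((k + 1) * #(G.cliqueFinset (k + 1))) ^ 2 ≤ #(G.cliqueFinset k) *
      (Fintype.card V * #(G.cliqueFinset (k + 1)) +
        k * ((k + 2) * #(G.cliqueFinset (k + 2)))) :=
  calc ((k + 1) * #(G.cliqueFinset (k + 1))) ^ 2
      = (∑ t ∈ G.cliqueFinset k, #(commonNeighborFinset G t)) ^ 2 := by
        rw [sum_card_commonNeighborFinset]
    _ ≤ #(G.cliqueFinset k) * ∑ t ∈ G.cliqueFinset k, #(commonNeighborFinset G t) ^ 2 :=
        sq_sum_le_card_mul_sum_sq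
    _ ≤ _ := Nat.mul_le_mul_left _ (sum_sq_card_commonNeighborFinset_le G k)

end CommonNeighbors

theorem moon_moser {V : Type*} [Fintype V] [DecidableEq V]
    (G : SimpleGraph V) [DecidableRel G.Adj]
    (n : ℕ) (hn : n = Fintype.card V)
    (c : ℕ → ℕ) (hc : ∀ h, c h = (G.cliqueFinset h).card)
    (h : ℕ) (h2 : 2 ≤ h) (hpos : 0 < c h) (hpos' : 0 < c (h - 1)) :
    ((h : ℝ) ^ 2 * (c h) / (c (h - 1)) - n) / (h ^ 2 - 1) ≤ (c (h + 1) : ℝ) / (c h) := by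
  obtain ⟨k, rfl⟩ : ∃ k, h = k + 1 := ⟨h - 1, by lia⟩
  rw [Nat.add_sub_cancel] at hpos' ⊢
  have cleared : (((k : ℝ) + 1) * c (k + 1)) ^ 2 ≤
      c k * (n * c (k + 1) + k * ((k + 2) * c (k + 1 + 1))) := by
    have := sq_succ_mul_card_cliqueFinset_succ_le G k
    rw [← hc, ← hc, ← hc, ← hn] at this
    exact_mod_cast this
  have hden : (0 : ℝ) < ((k + 1 : ℕ) : ℝ) ^ 2 - 1 :=
    sub_pos.2 (one_lt_pow₀ (by exact_mod_cast h2) two_ne_zero)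
  rw [div_le_div_iff₀ hden (Nat.cast_pos.2 hpos), sub_mul, sub_le_iff_le_add, div_mul_eq_mul_div,
    div_le_iff₀ (Nat.cast_pos.2 hpos')]
  push_cast
  linarith
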